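/- Let F be a field, R the ring of ternions over F, and n ≥ 1. Two vectors X, Y ∈ R^{n+1} lie in the same orbit under the action of GL_{n+1}(R) (acting by right multiplication of row vectors by invertible matrices over R) if and only if the right ideals I_X and I_Y of R generated by their respective coordinates coincide. -/

import Mathlib

set_option synthInstance.maxHeartbeats 1000000
set_option maxHeartbeats 1000000

/-- The ring of ternions over a field `F`: the subring of `2×2` matrices over `F`
consisting of all upper triangular matrices. -/
def ternions (F : Type) [Field F] : Subring (Matrix (Fin 2) (Fin 2) F) where
  carrier := {A | A 1 0 = 0}
  zero_mem' := by simp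
  one_mem' := by simp [Matrix.one_apply]
  add_mem' := by
    intro a b ha hb
    simp only [Set.mem_setOf_eq, Matrix.add_apply] at *
    simp [ha, hb]
  neg_mem' := by
    intro a ha
    simp only [Set.mem_setOf_eq, Matrix.neg_apply] at *
    simp [ha]
  mul_mem' := by
    intro a b ha hb
    simp only [Set.mem_setOf_eq, Matrix.mul_apply, Fin.sum_univ_two] at *
    simp [ha, hb]


lemma aux_field (F : Type) [Field F] (N : ℕ) (C B : Matrix (Fin N) (Fin N) F) :
    ∃ T : Matrix (Fin N) (Fin N) F, IsUnit (C + (1 - C * B) * T) := by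
  obtain ⟨W, hW⟩ := Submodule.exists_isCompl (LinearMap.range (Matrix.toLin' C))
  have hdim : Module.finrank F (LinearMap.ker (Matrix.toLin' C)) = Module.finrank F W := by
    have h1 := LinearMap.finrank_range_add_finrank_ker (Matrix.toLin' C)
    have h2 := Submodule.finrank_add_eq_of_isCompl hW
    omega
  let e := LinearEquiv.ofFinrankEq _ _ hdim
  obtain ⟨p, hp⟩ := LinearMap.exists_leftInverse_of_injective
    (LinearMap.ker (Matrix.toLin' C)).subtype (Submodule.ker_subtype _)
  let t : (Fin N → F) →ₗ[F] (Fin N → F) := W.subtype ∘ₗ e.toLinearMap ∘ₗ p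
  refine ⟨LinearMap.toMatrix' t, ?_⟩
  rw [← Matrix.mulVec_injective_iff_isUnit]
  refine (injective_iff_map_eq_zero
    (Matrix.mulVecLin (C + (1 - C * B) * LinearMap.toMatrix' t))).2 ?_
  intro v hv
  replace hv : (C + (1 - C * B) * LinearMap.toMatrix' t).mulVec v = 0 := hv
  rw [Matrix.add_mulVec, ← Matrix.mulVec_mulVec, LinearMap.toMatrix'_mulVec,
    Matrix.sub_mulVec, Matrix.one_mulVec, ← Matrix.mulVec_mulVec] at hv
  have ht : t v = C.mulVec (B.mulVec (t v) - v) := by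
    rw [Matrix.mulVec_sub]
    linear_combination hv
  have ht0 : t v = 0 := by
    have h1 : t v ∈ LinearMap.range (Matrix.toLin' C) := ⟨_, by rw [Matrix.toLin'_apply]; exact ht.symm⟩
    have h2 : t v ∈ W := (e (p v)).2
    exact (Submodule.disjoint_def.1 hW.disjoint) _ h1 h2
  have hpv : p v = 0 := by
    have : e (p v) = 0 := Subtype.ext ht0
    simpa using this
  rw [ht0] at hv
  have hk : v ∈ LinearMap.ker (Matrix.toLin' C) := by
    simpa [Matrix.toLin'_apply] using hv
  have := LinearMap.congr_fun hp ⟨v, hk⟩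
  simp only [LinearMap.comp_apply, Submodule.subtype_apply, LinearMap.id_apply, hpv] at this
  exact (congrArg Subtype.val this).symm

/-- diagonal entries -/
def ternDiag (F : Type) [Field F] (i : Fin 2) : ternions F →+* F where
  toFun a := a.1 i i
  map_one' := by simp
  map_zero' := by simp
  map_add' := by intro a b; simp
  map_mul' := by
    intro a b
    have ha : a.1 1 0 = 0 := a.2
    have hb : b.1 1 0 = 0 := b.2
    fin_cases i <;> simp [Matrix.mul_apply, Fin.sum_univ_two, ha, hb]

/-- diagonal ternion -/
def ternMk (F : Type) [Field F] (x y : F) : ternions F :=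
  ⟨!![x, 0; 0, y], by change _ = _; simp⟩

lemma tern_sq (F : Type) [Field F] (a b : ternions F) (ha : ∀ i, ternDiag F i a = 0)
    (hb : ∀ i, ternDiag F i b = 0) : a * b = 0 := by
  have ha' : a.1 1 0 = 0 := a.2
  have hb' : b.1 1 0 = 0 := b.2
  have h0 : a.1 0 0 = 0 := ha 0
  have h1 : a.1 1 1 = 0 := ha 1
  have h2 : b.1 0 0 = 0 := hb 0
  have h3 : b.1 1 1 = 0 := hb 1
  apply Subtype.ext
  ext i j
  fin_cases i <;> fin_cases j <;> simp [Matrix.mul_apply, Fin.sum_univ_two, *]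

lemma unit_of_diag_one (F : Type) [Field F] (N : ℕ) (M : Matrix (Fin N) (Fin N) (ternions F))
    (h : ∀ i, (ternDiag F i).mapMatrix M = 1) : IsUnit M := by
  have hn : IsNilpotent (M - 1) := by
    refine ⟨2, ?_⟩
    have h0 : ∀ j k i, ternDiag F i ((M - 1) j k) = 0 := by
      intro j k i
      have : (ternDiag F i).mapMatrix (M - 1) = 0 := by rw [map_sub, h, map_one, sub_self]
      exact congrFun (congrFun this j) k
    rw [sq]
    ext1 j k
    rw [Matrix.mul_apply]
    exact Finset.sum_eq_zero fun l _ => tern_sq F _ _ (h0 _ _) (h0 _ _)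
  simpa using hn.isUnit_add_one

lemma exists_lift (F : Type) [Field F] (N : ℕ) (T : Fin 2 → Matrix (Fin N) (Fin N) F) :
    ∃ M : Matrix (Fin N) (Fin N) (ternions F), ∀ i, (ternDiag F i).mapMatrix M = T i := by
  refine ⟨fun j k => ternMk F (T 0 j k) (T 1 j k), fun i => ?_⟩
  ext j k
  fin_cases i <;> rfl

lemma unit_of_diag (F : Type) [Field F] (N : ℕ) (M : Matrix (Fin N) (Fin N) (ternions F))
    (h : ∀ i, IsUnit ((ternDiag F i).mapMatrix M)) : IsUnit M := by
  choose u hu using h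
  obtain ⟨P, hP⟩ := exists_lift F N fun i => ((u i)⁻¹).val
  have h1 : IsUnit (M * P) := unit_of_diag_one F N _ fun i => by
    rw [map_mul, hP, ← hu, Units.mul_inv]
  have h2 : IsUnit (P * M) := unit_of_diag_one F N _ fun i => by
    rw [map_mul, hP, ← hu, Units.inv_mul]
  obtain ⟨a, ha⟩ := h1.exists_right_inv
  obtain ⟨b, hb⟩ := h2.exists_left_inv
  rw [mul_assoc] at ha
  rw [← mul_assoc] at hb
  have hab : b * P = P * a := left_inv_eq_right_inv hb ha
  exact ⟨⟨M, P * a, ha, by rw [← hab, hb]⟩, rfl⟩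

lemma exists_mat (F : Type) [Field F] (N : ℕ) (X Y : Fin N → ternions F)
    (h : Submodule.span (ternions F)ᵐᵒᵖ (Set.range Y) ≤
        Submodule.span (ternions F)ᵐᵒᵖ (Set.range X)) :
    ∃ C : Matrix (Fin N) (Fin N) (ternions F), Matrix.vecMul X C = Y := by
  have : ∀ j, ∃ c : Fin N → (ternions F)ᵐᵒᵖ, ∑ i, c i • X i = Y j := fun j =>
    (Submodule.mem_span_range_iff_exists_fun _).1 (h (Submodule.subset_span ⟨j, rfl⟩))
  choose c hc using this
  refine ⟨fun i j => (c j i).unop, ?_⟩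
  ext1 j
  rw [← hc j]
  rfl

lemma span_le_mat (F : Type) [Field F] (N : ℕ) (X : Fin N → ternions F)
    (C : Matrix (Fin N) (Fin N) (ternions F)) :
    Submodule.span (ternions F)ᵐᵒᵖ (Set.range (Matrix.vecMul X C)) ≤
        Submodule.span (ternions F)ᵐᵒᵖ (Set.range X) := by
  rw [Submodule.span_le]
  rintro _ ⟨j, rfl⟩
  exact (Submodule.mem_span_range_iff_exists_fun _).2 ⟨fun i => MulOpposite.op (C i j), rfl⟩

/-- Two vectors of `R^{n+1}` (`R` the ring of ternions) lie in the same orbit of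
`GL_{n+1}(R)` acting by right multiplication if and only if the right ideals generated
by their coordinates coincide. -/
theorem ternion_vector_orbits (F : Type) [Field F] (n : ℕ) (hn : 1 ≤ n)
    (X Y : Fin (n + 1) → ternions F) :
    (∃ A : (Matrix (Fin (n + 1)) (Fin (n + 1)) (ternions F))ˣ, Matrix.vecMul X A.val = Y) ↔
      Submodule.span (ternions F)ᵐᵒᵖ (Set.range X) =
        Submodule.span (ternions F)ᵐᵒᵖ (Set.range Y) := by
  constructor
  · rintro ⟨A, rfl⟩
    apply le_antisymm
    · have := span_le_mat F _ (Matrix.vecMul X A.val) (A⁻¹).val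
      rwa [Matrix.vecMul_vecMul, Units.mul_inv, Matrix.vecMul_one] at this
    · exact span_le_mat F _ _ _
  · intro h
    obtain ⟨C, hC⟩ := exists_mat F _ X Y h.ge
    obtain ⟨B, hB⟩ := exists_mat F _ Y X h.le
    choose t ht using fun i => aux_field F (n + 1) ((ternDiag F i).mapMatrix C)
      ((ternDiag F i).mapMatrix B)
    obtain ⟨T, hT⟩ := exists_lift F _ t
    obtain ⟨A, hA⟩ := unit_of_diag F _ (C + (1 - C * B) * T) fun i => by
      rw [map_add, map_mul, map_sub, map_mul, map_one, hT]
      exact ht i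
    refine ⟨A, ?_⟩
    rw [hA, Matrix.vecMul_add, ← Matrix.vecMul_vecMul, Matrix.vecMul_sub, Matrix.vecMul_one,
      ← Matrix.vecMul_vecMul, hC, hB, sub_self, Matrix.zero_vecMul, add_zero]
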